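/- Let R be a commutative ring and let D = {x ∈ R | x² = 0} be its set of first-order infinitesimals. If R satisfies the Kock–Lawvere axiom — for every function g : D → R there exists a unique b ∈ R such that g(d) = g(0) + d·b for all d ∈ D — then (in classical logic) R is a subsingleton, i.e. any two elements of R are equal. This expresses the paper's Proposition 1, that the Kock–Lawvere axiom is incompatible with the law of excluded middle (for any nontrivial ring). -/

import Mathlib

/-!
Excluded middle makes the indicator function of the nonzero infinitesimals available. A slope `b` of
it satisfies `d * b = 1` at every infinitesimal `d ≠ 0`, which is absurd because `d ^ 2 = 0`. So `0`
is the only infinitesimal, every element is then a slope of every function, and uniqueness of slopes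
collapses the ring.
-/

/-- The object `D` of first-order infinitesimals, as a subtype. An `abbrev`, so that functions on
`D` are functions on the subtype itself. -/
abbrev FirstOrderInfinitesimal (R : Type*) [MonoidWithZero R] : Type _ :=
  {x : R // x ^ 2 = 0}

instance (R : Type*) [MonoidWithZero R] : Zero (FirstOrderInfinitesimal R) :=
  ⟨⟨0, zero_pow two_ne_zero⟩⟩

theorem eq_zero_of_sq_eq_zero_of_mul_eq_one {M : Type*} [MonoidWithZero M] {d b : M}
    (hd : d ^ 2 = 0) (hdb : d * b = 1) : d = 0 :=
  calc
    d = d * (d * b) := by rw [hdb, mul_one]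
    _ = d ^ 2 * b := by rw [sq, mul_assoc]
    _ = 0 := by rw [hd, zero_mul]

section Slope

variable {R : Type*} [Semiring R]

/-- `b` is a slope (a derivative at `0`) of the function `g` on first-order infinitesimals. It is a
relation because a slope need neither exist nor be unique; the coefficient stands on the right of
the infinitesimal, which matters when `R` is not commutative. -/
def HasSlope (g : FirstOrderInfinitesimal R → R) (b : R) : Prop :=
  ∀ d : FirstOrderInfinitesimal R, g d = g 0 + d.val * b

variable (R) in
/-- The Kock–Lawvere axiom: every function on first-order infinitesimals has exactly one slope. -/
def KockLawvere : Prop :=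
  ∀ g : FirstOrderInfinitesimal R → R, ∃! b : R, HasSlope g b

theorem mul_eq_one_of_hasSlope_indicator {b : R} {d : FirstOrderInfinitesimal R}
    (hb : HasSlope (Set.indicator {0}ᶜ 1) b) (hd : d ≠ 0) : d.val * b = 1 := by
  simpa [hd] using (hb d).symm

theorem subsingleton_of_hasSlope_indicator {b : R}
    (hb : HasSlope (Set.indicator {0}ᶜ 1) b) : Subsingleton (FirstOrderInfinitesimal R) := by
  refine subsingleton_of_forall_eq 0 fun d => ?_
  by_contra hd
  exact hd (Subtype.ext
    (eq_zero_of_sq_eq_zero_of_mul_eq_one d.property (mul_eq_one_of_hasSlope_indicator hb hd)))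

theorem hasSlope_of_subsingleton [Subsingleton (FirstOrderInfinitesimal R)]
    (g : FirstOrderInfinitesimal R → R) (b : R) : HasSlope g b := by
  intro d
  obtain rfl : d = 0 := Subsingleton.elim d 0
  change g 0 = g 0 + 0 * b
  rw [zero_mul, add_zero]

end Slope

theorem kock_lawvere_incompatible_with_LEM_general {R : Type*} [Semiring R]
    (KL : KockLawvere R) : Subsingleton R := by
  obtain ⟨b, hb, -⟩ := KL (Set.indicator {0}ᶜ 1)
  have := subsingleton_of_hasSlope_indicator hb
  exact ⟨fun x y => (KL 0).unique (hasSlope_of_subsingleton 0 x) (hasSlope_of_subsingleton 0 y)⟩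

/-- **Proposition 1 (Kock–Lawvere vs. excluded middle).**
Let `R` be a commutative ring and `D = {x ∈ R | x² = 0}` its set of first-order
infinitesimals.  If `R` satisfies the Kock–Lawvere axiom — every `g : D → R` is
representable as `g d = g 0 + d * b` for a unique `b : R` — then, in classical
logic, `R` is a subsingleton: any two elements of `R` are equal. -/
theorem kock_lawvere_incompatible_with_LEM
    {R : Type*} [CommRing R]
    (KL : ∀ g : {x : R // x ^ 2 = 0} → R,
      ∃! b : R, ∀ d : {x : R // x ^ 2 = 0},
        g d = g ⟨0, by ring⟩ + d.val * b) :
    ∀ a b : R, a = b :=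
  (kock_lawvere_incompatible_with_LEM_general KL).elim
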